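/- Under the MS-LS model, for every node i, every integer m ≥ 1 and every previous state l ∈ {1,…,K}, the m-th derivative at x = 1 of the conditional probability generating function G_l of the nodal strength Y_{it} given s_{t-1} = l (equivalently, the m-th factorial moment E[Y_{it}(Y_{it}−1)⋯(Y_{it}−m+1) | s_{t-1} = l]) satisfies G_l^{(m)}(1) = Σ_{k=1}^K q_{lk} G̃_k^{(m)}(1) = Σ_{k=1}^K Σ_{h ∈ H_i} binom(m; h) exp(Σ_{j≠i}(α_i+α_j)h_j) (σ_k²)^{−d/2} b_{h,k} q_{lk}, where G̃_k is the conditional pgf of Y_{it} given s_t = k, H_i is the set of multi-indices h = (h_j)_{j≠i} of nonnegative integers with Σ_{j≠i} h_j = m, binom(m; h) is the multinomial coefficient m!/∏_{j≠i} h_j!, N_i = {j ≠ i : h_j > 0}, and b_{h,k} = (1/σ_k² + Σ_{j∈N_i} 2βh_j/(2βh_jσ_k² + 1))^{−d/2} ∏_{j∈N_i} (2βh_jσ_k² + 1)^{−d/2}. -/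

import Mathlib

open MeasureTheory ProbabilityTheory Real

noncomputable section

/-- Density of the centered isotropic Gaussian `N(0, σ² I_d)` on `ℝ^d`. -/
def gaussPdf (d : ℕ) (σ2 : ℝ) (x : EuclideanSpace ℝ (Fin d)) : ℝ :=
  (2 * Real.pi * σ2) ^ (-(d : ℝ) / 2) * Real.exp (-‖x‖ ^ 2 / (2 * σ2))

/-- The centered isotropic Gaussian measure `N(0, σ² I_d)` on `ℝ^d`. -/
def gaussMeasure (d : ℕ) (σ2 : ℝ) : Measure (EuclideanSpace ℝ (Fin d)) :=
  volume.withDensity fun x => ENNReal.ofReal (gaussPdf d σ2 x)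

/-- Unordered pairs of distinct nodes, represented as ordered pairs `(i, j)` with `i < j`. -/
abbrev Pairs (N : ℕ) : Type := {p : Fin N × Fin N // p.1 < p.2}

/-- Joint law of the latent positions `(Z_i)_{i}` (i.i.d. `N(0, σ² I_d)`) and of the
edge weights `(Y_{ij})_{i<j}`, which given the latent positions are conditionally independent
Poisson variables with intensity `exp (α_i + α_j - β ‖Z_i - Z_j‖²)`. -/
def jointLaw (d N : ℕ) (β : ℝ) (α : Fin N → ℝ) (σ2 : ℝ) :
    Measure ((Fin N → EuclideanSpace ℝ (Fin d)) × (Pairs N → ℕ)) :=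
  (volume.withDensity fun z : Fin N → EuclideanSpace ℝ (Fin d) =>
      ENNReal.ofReal (∏ i, gaussPdf d σ2 (z i))).bind fun z =>
    (Measure.pi fun p : Pairs N =>
        poissonMeasure
          (Real.exp (α p.1.1 + α p.1.2 - β * ‖z p.1.1 - z p.1.2‖ ^ 2)).toNNReal).map
      fun y => (z, y)

/-- The Markov-switching latent space (MS-LS) network model: a hidden `K`-state Markov chain
`s`, state-dependent i.i.d. Gaussian latent positions `Z`, and symmetric edge weights `Y`
that conditionally on the current state (and given the latent positions) are independent
Poisson variables with log-intensity `α i + α j - β ‖Z i k - Z j k‖²`. -/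
structure MSLS (Ω : Type) [MeasurableSpace Ω] where
  /-- the underlying probability measure -/
  P : Measure Ω
  isProb : IsProbabilityMeasure P
  /-- the dimension of the latent space -/
  d : ℕ
  /-- the number of nodes -/
  N : ℕ
  /-- the number of states of the hidden Markov chain -/
  K : ℕ
  β : ℝ
  β_pos : 0 < β
  /-- individual effects -/
  α : Fin N → ℝ
  /-- state-specific variances of the latent positions -/
  σ2 : Fin K → ℝ
  σ2_pos : ∀ k, 0 < σ2 k
  /-- transition probabilities of the hidden Markov chain -/
  q : Fin K → Fin K → ℝ
  q_nonneg : ∀ l k, 0 ≤ q l k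
  q_sum : ∀ l, ∑ k, q l k = 1
  /-- the hidden Markov chain -/
  s : ℕ → Ω → Fin K
  s_meas : ∀ t, Measurable (s t)
  /-- the latent positions in each state -/
  Z : Fin N → Fin K → Ω → EuclideanSpace ℝ (Fin d)
  Z_meas : ∀ i k, Measurable (Z i k)
  /-- the edge weights -/
  Y : Fin N → Fin N → ℕ → Ω → ℕ
  Y_meas : ∀ i j t, Measurable (Y i j t)
  Y_symm : ∀ i j t ω, Y i j t ω = Y j i t ω
  state_pos : ∀ t k, P {ω | s t ω = k} ≠ 0
  /-- Markov transition probabilities -/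
  trans_prob : ∀ t l k, ((P[|{ω | s t ω = l}]) {ω | s (t + 1) ω = k}).toReal = q l k
  /-- conditionally on the current state, the latent positions and the edge weights follow
  the Poisson latent space law -/
  cond_law_state : ∀ t k,
    (P[|{ω | s t ω = k}]).map
        (fun ω => ((fun i => Z i k ω), fun p : Pairs N => Y p.1.1 p.1.2 t ω)) =
      jointLaw d N β α (σ2 k)
  /-- conditionally on the previous and current state, the latent positions and the edge
  weights follow the Poisson latent space law of the current state -/
  cond_law_pair : ∀ t l k, q l k ≠ 0 →
    (P[|{ω | s t ω = l} ∩ {ω | s (t + 1) ω = k}]).map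
        (fun ω => ((fun i => Z i k ω), fun p : Pairs N => Y p.1.1 p.1.2 (t + 1) ω)) =
      jointLaw d N β α (σ2 k)

attribute [instance] MSLS.isProb

/-- The nodal strength `Y_{it} = Σ_{j ≠ i} Y_{ijt}` of node `i` at time `t`. -/
def MSLS.strength {Ω : Type} [MeasurableSpace Ω] (M : MSLS Ω) (i : Fin M.N) (t : ℕ)
    (ω : Ω) : ℕ :=
  ∑ j ∈ Finset.univ.erase i, M.Y i j t ω

end

/-!
Given the latent positions, the strength of a node is a sum of independent Poisson variables, hence
Poisson, and its `m`-th factorial moment is the `m`-th power `(∑ j, λ_ij) ^ m` of its mean. The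
multinomial theorem expands this power into terms which, up to a constant, are products of Gaussian
kernels `exp (-β h_j ‖z_i - z_j‖²)` attached to the edges of a star centred at `i`. Given `z_i` the
leaves decouple, and completing the square integrates each of them out against its Gaussian law,
leaving a single Gaussian kernel in `z_i`. Conditioning on the previous state only mixes the laws
of the strength in the current states, with the transition probabilities as weights.
-/

open scoped ENNReal NNReal

section ProductMeasure

variable {ι : Type*}

lemma lmarginal_prod_apply [DecidableEq ι] {X : ι → Type*} [∀ i, MeasurableSpace (X i)]
    (μ : ∀ i, Measure (X i)) [∀ i, SigmaFinite (μ i)] {f : ∀ i, X i → ℝ≥0∞}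
    (hf : ∀ i, Measurable (f i)) (s : Finset ι) (x : ∀ i, X i) :
    (∫⋯∫⁻_s, fun z => ∏ i ∈ s, f i (z i) ∂μ) x = ∏ i ∈ s, ∫⁻ w, f i w ∂μ i := by
  induction s using Finset.induction_on generalizing x with
  | empty => simp
  | insert a s ha ih =>
    have hpull (z : ∀ i, X i) : (∫⋯∫⁻_s, fun z => ∏ i ∈ insert a s, f i (z i) ∂μ) z =
        f a (z a) * ∏ i ∈ s, ∫⁻ w, f i w ∂μ i := by
      rw [← ih z]
      have hcenter (y : ∀ i : s, X i) : Function.updateFinset z s y a = z a := dif_neg ha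
      simp only [lmarginal, Finset.prod_insert ha, hcenter]
      exact lintegral_const_mul _ <|
        (Finset.measurable_fun_prod s fun i _ => (hf i).comp (measurable_pi_apply i)).comp
          measurable_updateFinset
    rw [lmarginal_insert _ (by fun_prop) ha, Finset.prod_insert ha]
    simp only [hpull, Function.update_self]
    exact lintegral_mul_const _ (hf a)

variable [Fintype ι]

lemma pi_withDensity {X : ι → Type*} [∀ i, MeasurableSpace (X i)]
    (μ : ∀ i, Measure (X i)) [∀ i, SigmaFinite (μ i)] {f : ∀ i, X i → ℝ≥0∞}
    [∀ i, SigmaFinite ((μ i).withDensity (f i))] (hf : ∀ i, Measurable (f i)) :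
    Measure.pi (fun i => (μ i).withDensity (f i)) =
      (Measure.pi μ).withDensity fun x => ∏ i, f i (x i) := by
  classical
  rcases isEmpty_or_nonempty (∀ i, X i) with _ | ⟨⟨x⟩⟩
  · exact Subsingleton.elim _ _
  refine Measure.pi_eq fun s hs => ?_
  rw [withDensity_apply _ (.univ_pi hs), Measure.restrict_pi_pi, lintegral_eq_lmarginal_univ x,
    lmarginal_prod_apply _ hf]
  exact Finset.prod_congr rfl fun i _ => (withDensity_apply _ (hs i)).symm

lemma lintegral_pi_prod_star [DecidableEq ι] {X : Type*} [MeasurableSpace X] (μ : ι → Measure X)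
    [∀ i, SigmaFinite (μ i)] (i : ι) {f : ι → X → X → ℝ≥0∞}
    (hf : ∀ j, Measurable (Function.uncurry (f j))) :
    ∫⁻ z, ∏ j ∈ Finset.univ.erase i, f j (z i) (z j) ∂Measure.pi μ =
      ∫⁻ x, ∏ j ∈ Finset.univ.erase i, ∫⁻ w, f j x w ∂μ j ∂μ i := by
  have hmeas : Measurable fun z : ι → X => ∏ j ∈ Finset.univ.erase i, f j (z i) (z j) := by
    fun_prop
  rcases isEmpty_or_nonempty X with _ | ⟨⟨x₀⟩⟩
  · have : IsEmpty (ι → X) := ⟨fun z => isEmptyElim (z i)⟩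
    simp
  have hleaves (z : ι → X) :
      (∫⋯∫⁻_Finset.univ.erase i, fun z => ∏ j ∈ Finset.univ.erase i, f j (z i) (z j) ∂μ) z =
        ∏ j ∈ Finset.univ.erase i, ∫⁻ w, f j (z i) w ∂μ j := by
    rw [← lmarginal_prod_apply μ (fun j => (hf j).of_uncurry_left (x := z i)) _ z]
    simp [lmarginal, Function.updateFinset]
  rw [lintegral_eq_lmarginal_univ fun _ => x₀, lmarginal_erase _ hmeas (Finset.mem_univ i)]
  simp only [hleaves, Function.update_self]

lemma measurable_measure_pi {A : Type*} [MeasurableSpace A] {X : ι → Type*}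
    [∀ i, MeasurableSpace (X i)] {κ : ∀ i, A → Measure (X i)} [∀ i a, IsProbabilityMeasure (κ i a)]
    (hκ : ∀ i, Measurable (κ i)) : Measurable fun a => Measure.pi fun i => κ i a := by
  refine .measure_of_isPiSystem_of_isProbabilityMeasure generateFrom_pi.symm isPiSystem_pi ?_
  rintro _ ⟨s, hs, rfl⟩
  simp only [Measure.pi_pi]
  exact Finset.measurable_fun_prod _ fun i _ =>
    (Measure.measurable_coe (hs i (Set.mem_univ i))).comp (hκ i)

end ProductMeasure

section Poisson

lemma poissonMeasure_zero : poissonMeasure 0 = Measure.dirac 0 := by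
  refine Measure.ext_of_singleton fun n => ?_
  rcases n with _ | n <;> simp [poissonMeasure_singleton]

lemma measurable_poissonMeasure : Measurable poissonMeasure := by
  refine Measure.measurable_of_measurable_coe _ fun s hs => ?_
  simp only [poissonMeasure, Measure.sum_apply _ hs, Measure.smul_apply, smul_eq_mul]
  fun_prop

lemma hasLaw_sum_poissonMeasure {ι Ω : Type*} [MeasurableSpace Ω] {P : Measure Ω}
    {X : ι → Ω → ℕ} {r : ι → ℝ≥0} (hX : iIndepFun X P)
    (hlaw : ∀ i, HasLaw (X i) (poissonMeasure (r i)) P) (s : Finset ι) :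
    HasLaw (∑ i ∈ s, X i) (poissonMeasure (∑ i ∈ s, r i)) P := by
  have := hX.isProbabilityMeasure
  induction s using Finset.cons_induction with
  | empty =>
    rw [Finset.sum_empty, Finset.sum_empty, poissonMeasure_zero]
    exact hasLaw_dirac_of_ae_eq (.of_forall fun _ => rfl)
  | cons a s ha ih =>
    rw [Finset.sum_cons, Finset.sum_cons]
    exact (hX.indepFun_finsetSum_of_notMem₀ (fun i => (hlaw i).aemeasurable) ha).symm
      |>.hasLaw_add_poissonMeasure (hlaw a) ih

lemma descFactorial_mul_poissonMeasure_singleton (r : ℝ≥0) (n m : ℕ) :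
    ((n + m).descFactorial m : ℝ≥0∞) * poissonMeasure r {n + m} =
      (r : ℝ≥0∞) ^ m * poissonMeasure r {n} := by
  rw [poissonMeasure_singleton, poissonMeasure_singleton, ← ENNReal.ofReal_natCast,
    ← ENNReal.ofReal_coe_nnreal, ← ENNReal.ofReal_pow (by positivity),
    ← ENNReal.ofReal_mul (by positivity), ← ENNReal.ofReal_mul (by positivity)]
  have hfactorial : ((n + m).factorial : ℝ) = n.factorial * (n + m).descFactorial m := by
    have := Nat.factorial_mul_descFactorial (Nat.le_add_left m n)
    rw [Nat.add_sub_cancel] at this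
    exact_mod_cast this.symm
  have hpos : ((n + m).descFactorial m : ℝ) ≠ 0 :=
    right_ne_zero_of_mul (hfactorial ▸ Nat.cast_ne_zero.2 (Nat.factorial_ne_zero _))
  congr 1
  rw [hfactorial]
  field_simp
  ring

lemma lintegral_descFactorial_poissonMeasure (r : ℝ≥0) (m : ℕ) :
    ∫⁻ n, (n.descFactorial m : ℝ≥0∞) ∂poissonMeasure r = (r : ℝ≥0∞) ^ m := by
  have hlow : ∑ n ∈ Finset.range m, (n.descFactorial m : ℝ≥0∞) * poissonMeasure r {n} = 0 :=
    Finset.sum_eq_zero fun n hn => by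
      rw [Nat.descFactorial_of_lt (Finset.mem_range.1 hn), Nat.cast_zero, zero_mul]
  have hmass : ∑' n, poissonMeasure r {n} = 1 := by
    simpa using (lintegral_countable' (μ := poissonMeasure r) fun _ => 1).symm
  calc ∫⁻ n, (n.descFactorial m : ℝ≥0∞) ∂poissonMeasure r
      = ∑' n, ((n + m).descFactorial m : ℝ≥0∞) * poissonMeasure r {n + m} := by
        rw [lintegral_countable', ← ENNReal.summable.sum_add_tsum_nat_add' (k := m), hlow, zero_add]
    _ = (r : ℝ≥0∞) ^ m := by
        simp only [descFactorial_mul_poissonMeasure_singleton, ENNReal.tsum_mul_left, hmass,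
          mul_one]

end Poisson

section Gaussian

lemma lintegral_exp_neg_mul_sq_norm {V : Type*} [NormedAddCommGroup V] [InnerProductSpace ℝ V]
    [FiniteDimensional ℝ V] [MeasurableSpace V] [BorelSpace V] {b : ℝ} (hb : 0 < b) :
    ∫⁻ v : V, ENNReal.ofReal (rexp (-b * ‖v‖ ^ 2)) =
      ENNReal.ofReal ((π / b) ^ (Module.finrank ℝ V / 2 : ℝ)) := by
  have hint := GaussianFourier.integral_rexp_neg_mul_sq_norm (V := V) hb
  have hintegrable : Integrable fun v : V => rexp (-b * ‖v‖ ^ 2) :=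
    .of_integral_ne_zero (by rw [hint]; positivity)
  rw [← hint, ofReal_integral_eq_lintegral_ofReal hintegrable (.of_forall fun _ => by positivity)]

lemma mul_sq_norm_add_mul_sq_norm_sub {V : Type*} [NormedAddCommGroup V] [InnerProductSpace ℝ V]
    {a c : ℝ} (hac : a + c ≠ 0) (x w : V) :
    a * ‖w‖ ^ 2 + c * ‖x - w‖ ^ 2 =
      (a + c) * ‖w - (c / (a + c)) • x‖ ^ 2 + a * c / (a + c) * ‖x‖ ^ 2 := by
  rw [norm_sub_sq_real, norm_sub_sq_real, inner_smul_right, norm_smul, mul_pow, Real.norm_eq_abs,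
    sq_abs, real_inner_comm]
  field_simp
  ring

lemma measurable_gaussPdf (d : ℕ) (v : ℝ) : Measurable (gaussPdf d v) := by
  unfold gaussPdf
  fun_prop

lemma gaussPdf_nonneg (d : ℕ) {v : ℝ} (hv : 0 ≤ v) (x : EuclideanSpace ℝ (Fin d)) :
    0 ≤ gaussPdf d v x := by
  unfold gaussPdf
  positivity

instance (d : ℕ) (v : ℝ) : SigmaFinite (gaussMeasure d v) :=
  SigmaFinite.withDensity_ofReal _

lemma pi_gaussMeasure {ι : Type*} [Fintype ι] (d : ℕ) {v : ℝ} (hv : 0 ≤ v) :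
    Measure.pi (fun _ : ι => gaussMeasure d v) =
      volume.withDensity fun z => ENNReal.ofReal (∏ i, gaussPdf d v (z i)) := by
  have : SigmaFinite (volume.withDensity fun x => ENNReal.ofReal (gaussPdf d v x)) :=
    inferInstanceAs (SigmaFinite (gaussMeasure d v))
  simp only [ENNReal.ofReal_prod_of_nonneg fun _ _ => gaussPdf_nonneg d hv _, volume_pi]
  exact pi_withDensity _ fun _ => (measurable_gaussPdf d v).ennreal_ofReal

lemma gaussPdf_mul_exp (d : ℕ) {v c : ℝ} (hv : 0 < v) (hc : 0 ≤ c)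
    (x w : EuclideanSpace ℝ (Fin d)) :
    gaussPdf d v w * rexp (-c * ‖x - w‖ ^ 2) =
      (2 * π * v) ^ (-(d : ℝ) / 2) * rexp (-(c / (2 * c * v + 1)) * ‖x‖ ^ 2) *
        rexp (-((2 * c * v + 1) / (2 * v)) * ‖w - (2 * c * v / (2 * c * v + 1)) • x‖ ^ 2) := by
  have hsum : 1 / (2 * v) + c = (2 * c * v + 1) / (2 * v) := by field_simp; ring
  have hcenter : c / ((2 * c * v + 1) / (2 * v)) = 2 * c * v / (2 * c * v + 1) := by field_simp
  have hcoeff : 1 / (2 * v) * c / ((2 * c * v + 1) / (2 * v)) = c / (2 * c * v + 1) := by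
    field_simp
  have hsquare := mul_sq_norm_add_mul_sq_norm_sub (a := 1 / (2 * v)) (c := c) (by positivity) x w
  rw [hsum, hcenter, hcoeff] at hsquare
  rw [gaussPdf, mul_assoc _ (rexp _), mul_assoc _ (rexp _), ← Real.exp_add, ← Real.exp_add]
  congr 2
  linear_combination -hsquare

lemma lintegral_exp_neg_mul_sq_norm_sub_gaussMeasure (d : ℕ) {v c : ℝ} (hv : 0 < v) (hc : 0 ≤ c)
    (x : EuclideanSpace ℝ (Fin d)) :
    ∫⁻ w, ENNReal.ofReal (rexp (-c * ‖x - w‖ ^ 2)) ∂gaussMeasure d v =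
      ENNReal.ofReal ((2 * c * v + 1) ^ (-(d : ℝ) / 2) *
        rexp (-(c / (2 * c * v + 1)) * ‖x‖ ^ 2)) := by
  have hconst : 0 ≤ (2 * π * v) ^ (-(d : ℝ) / 2) * rexp (-(c / (2 * c * v + 1)) * ‖x‖ ^ 2) := by
    positivity
  have hpower : (2 * π * v) ^ (-(d : ℝ) / 2) * (π / ((2 * c * v + 1) / (2 * v))) ^ ((d : ℝ) / 2) =
      (2 * c * v + 1) ^ (-(d : ℝ) / 2) := by
    have hratio : π / ((2 * c * v + 1) / (2 * v)) = 2 * π * v / (2 * c * v + 1) := by field_simp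
    rw [hratio, Real.div_rpow (by positivity) (by positivity), neg_div,
      Real.rpow_neg (by positivity), Real.rpow_neg (by positivity)]
    field_simp
  rw [gaussMeasure, lintegral_withDensity_eq_lintegral_mul _
    (measurable_gaussPdf d v).ennreal_ofReal (by fun_prop)]
  simp only [Pi.mul_apply, ← ENNReal.ofReal_mul (gaussPdf_nonneg d hv.le _),
    gaussPdf_mul_exp d hv hc x, ENNReal.ofReal_mul hconst]
  rw [lintegral_const_mul _ (by fun_prop),
    lintegral_sub_right_eq_self fun w => ENNReal.ofReal (rexp (_ * ‖w‖ ^ 2)),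
    lintegral_exp_neg_mul_sq_norm (by positivity), ← ENNReal.ofReal_mul hconst,
    finrank_euclideanSpace_fin, mul_right_comm, hpower]

lemma lintegral_exp_neg_mul_sq_norm_gaussMeasure (d : ℕ) {v c : ℝ} (hv : 0 < v) (hc : 0 ≤ c) :
    ∫⁻ w, ENNReal.ofReal (rexp (-c * ‖w‖ ^ 2)) ∂gaussMeasure d v =
      ENNReal.ofReal ((2 * c * v + 1) ^ (-(d : ℝ) / 2)) := by
  simpa using lintegral_exp_neg_mul_sq_norm_sub_gaussMeasure d hv hc 0

lemma lintegral_pi_gaussMeasure_prod_exp_star {ι : Type*} [Fintype ι] [DecidableEq ι] (d : ℕ)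
    {v : ℝ} (hv : 0 < v) (i : ι) {c : ι → ℝ} (hc : ∀ j, 0 ≤ c j) :
    ∫⁻ z : ι → EuclideanSpace ℝ (Fin d), ∏ j ∈ Finset.univ.erase i,
        ENNReal.ofReal (rexp (-c j * ‖z i - z j‖ ^ 2)) ∂Measure.pi (fun _ => gaussMeasure d v) =
      ENNReal.ofReal ((∏ j ∈ Finset.univ.erase i, (2 * c j * v + 1) ^ (-(d : ℝ) / 2)) *
        (2 * (∑ j ∈ Finset.univ.erase i, c j / (2 * c j * v + 1)) * v + 1) ^ (-(d : ℝ) / 2)) := by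
  have hden (j : ι) : 0 ≤ 2 * c j * v + 1 := by have := hc j; positivity
  have hleaves (x : EuclideanSpace ℝ (Fin d)) : ∏ j ∈ Finset.univ.erase i,
      ∫⁻ w, ENNReal.ofReal (rexp (-c j * ‖x - w‖ ^ 2)) ∂gaussMeasure d v =
      ENNReal.ofReal (∏ j ∈ Finset.univ.erase i, (2 * c j * v + 1) ^ (-(d : ℝ) / 2)) *
        ENNReal.ofReal
          (rexp (-(∑ j ∈ Finset.univ.erase i, c j / (2 * c j * v + 1)) * ‖x‖ ^ 2)) := by
    simp only [lintegral_exp_neg_mul_sq_norm_sub_gaussMeasure d hv (hc _)]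
    rw [← ENNReal.ofReal_mul (Finset.prod_nonneg fun j _ => Real.rpow_nonneg (hden j) _),
      ← ENNReal.ofReal_prod_of_nonneg fun j _ =>
        mul_nonneg (Real.rpow_nonneg (hden j) _) (Real.exp_nonneg _),
      Finset.prod_mul_distrib, ← Real.exp_sum, ← Finset.sum_mul, Finset.sum_neg_distrib]
  rw [lintegral_pi_prod_star _ i (f := fun j x w => ENNReal.ofReal (rexp (-c j * ‖x - w‖ ^ 2)))
    fun j => by fun_prop]
  simp only [hleaves]
  rw [lintegral_const_mul _ (by fun_prop), lintegral_exp_neg_mul_sq_norm_gaussMeasure d hv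
    (Finset.sum_nonneg fun j _ => div_nonneg (hc j) (hden j)), ← ENNReal.ofReal_mul
    (Finset.prod_nonneg fun j _ => Real.rpow_nonneg (hden j) _)]

end Gaussian

section Network

variable {N : ℕ}

/-- The pair formed by the node `i` and another node `j`, sorted as `Pairs N` requires. -/
def edge (i : Fin N) (j : {j // j ≠ i}) : Pairs N :=
  if h : i < j then ⟨(i, j), h⟩ else ⟨(j, i), lt_of_le_of_ne (not_lt.1 h) j.2⟩

lemma edge_injective (i : Fin N) : Function.Injective (edge i) := by
  rintro ⟨j, hj⟩ ⟨k, hk⟩ h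
  simp only [edge] at h
  split_ifs at h <;> simp_all [Prod.ext_iff]

/-- The strength of the node `i` in the network with edge weights `y`. -/
def nodeStrength (y : Pairs N → ℕ) (i : Fin N) : ℕ :=
  ∑ j : {j // j ≠ i}, y (edge i j)

lemma measurable_nodeStrength_snd {A : Type*} [MeasurableSpace A] (i : Fin N) :
    Measurable fun x : A × (Pairs N → ℕ) => nodeStrength x.2 i :=
  (measurable_of_countable fun y => nodeStrength y i).comp measurable_snd

lemma hasLaw_nodeStrength (r : Pairs N → ℝ≥0) (i : Fin N) :
    HasLaw (fun y => nodeStrength y i) (poissonMeasure (∑ j, r (edge i j)))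
      (Measure.pi fun p => poissonMeasure (r p)) := by
  have hindep : iIndepFun (fun (j : {j // j ≠ i}) (y : Pairs N → ℕ) => y (edge i j))
      (Measure.pi fun p => poissonMeasure (r p)) :=
    (iIndepFun_pi (X := fun _ => id) fun _ => aemeasurable_id).precomp (edge_injective i)
  convert hasLaw_sum_poissonMeasure (r := fun j => r (edge i j)) hindep
    (fun j => (measurePreserving_eval (fun p => poissonMeasure (r p)) (edge i j)).hasLaw)
    Finset.univ using 2 with y
  exact (Finset.sum_apply y Finset.univ fun j (y : Pairs N → ℕ) => y (edge i j)).symm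

variable {E : Type*} [SeminormedAddCommGroup E]

/-- The Poisson intensity `λ_p` of the pair `p` of nodes when the latent positions are `z`. -/
noncomputable def edgeRate (β : ℝ) (α : Fin N → ℝ) (z : Fin N → E) (p : Pairs N) : ℝ≥0 :=
  (rexp (α p.1.1 + α p.1.2 - β * ‖z p.1.1 - z p.1.2‖ ^ 2)).toNNReal

lemma edgeRate_edge (β : ℝ) (α : Fin N → ℝ) (z : Fin N → E) (i : Fin N) (j : {j // j ≠ i}) :
    edgeRate β α z (edge i j) = (rexp (α i + α j - β * ‖z i - z j‖ ^ 2)).toNNReal := by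
  unfold edgeRate edge
  split_ifs
  · rfl
  · simp only [norm_sub_rev (z j), add_comm (α j)]

lemma sum_edgeRate_edge_pow (β : ℝ) (α : Fin N → ℝ) (z : Fin N → E) (i : Fin N) (m : ℕ) :
    ((∑ j, edgeRate β α z (edge i j) : ℝ≥0) : ℝ≥0∞) ^ m =
      ∑ h ∈ (Finset.univ.erase i).piAntidiag m,
        ENNReal.ofReal (Nat.multinomial (Finset.univ.erase i) h *
          rexp (∑ j ∈ Finset.univ.erase i, (α i + α j) * h j)) *
        ∏ j ∈ Finset.univ.erase i, ENNReal.ofReal (rexp (-(β * h j) * ‖z i - z j‖ ^ 2)) := by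
  have hsum : ((∑ j, edgeRate β α z (edge i j) : ℝ≥0) : ℝ≥0∞) =
      ∑ j ∈ Finset.univ.erase i, ENNReal.ofReal (rexp (α i + α j - β * ‖z i - z j‖ ^ 2)) := by
    rw [Finset.sum_subtype (p := (· ≠ i)) (F := inferInstance) _ (by simp),
      ENNReal.ofNNReal_finsetSum]
    simp only [edgeRate_edge, ENNReal.ofReal]
  rw [hsum, Finset.sum_pow_eq_sum_piAntidiag]
  refine Finset.sum_congr rfl fun h _ => ?_
  rw [ENNReal.ofReal_mul (by positivity), ENNReal.ofReal_natCast, mul_assoc, Real.exp_sum,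
    ENNReal.ofReal_prod_of_nonneg fun _ _ => Real.exp_nonneg _, ← Finset.prod_mul_distrib]
  congr 1
  refine Finset.prod_congr rfl fun j _ => ?_
  rw [← ENNReal.ofReal_pow (by positivity), ← ENNReal.ofReal_mul (by positivity),
    ← Real.exp_nat_mul, ← Real.exp_add]
  ring_nf

variable [MeasurableSpace E] [BorelSpace E] [SecondCountableTopology E]

/-- The conditional law of the edge weights given the latent positions. -/
noncomputable def edgeKernel (β : ℝ) (α : Fin N → ℝ) : Kernel (Fin N → E) (Pairs N → ℕ) where
  toFun z := Measure.pi fun p => poissonMeasure (edgeRate β α z p)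
  measurable' := measurable_measure_pi fun _ =>
    measurable_poissonMeasure.comp (by unfold edgeRate; fun_prop)

instance (β : ℝ) (α : Fin N → ℝ) : IsMarkovKernel (edgeKernel (E := E) β α) :=
  ⟨fun _ => inferInstanceAs (IsProbabilityMeasure (Measure.pi _))⟩

lemma lintegral_descFactorial_nodeStrength_edgeKernel (β : ℝ) (α : Fin N → ℝ) (z : Fin N → E)
    (i : Fin N) (m : ℕ) :
    ∫⁻ y, ((nodeStrength y i).descFactorial m : ℝ≥0∞) ∂edgeKernel β α z =
      ((∑ j, edgeRate β α z (edge i j) : ℝ≥0) : ℝ≥0∞) ^ m := by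
  rw [← lintegral_descFactorial_poissonMeasure]
  exact (hasLaw_nodeStrength (edgeRate β α z) i).lintegral_comp
    (f := fun n => (n.descFactorial m : ℝ≥0∞)) (measurable_of_countable _).aemeasurable

end Network

section JointLaw

variable {N : ℕ} (d : ℕ) (β : ℝ) (α : Fin N → ℝ) (v : ℝ) (i : Fin N)

/-- The law of the strength of the node `i` in a state of variance `v`. -/
noncomputable def strengthLaw : Measure ℕ :=
  (jointLaw d N β α v).map fun x => nodeStrength x.2 i

/-- The coefficient `b_{h,k}` of the multi-index `h` in a state of variance `v`. -/
noncomputable def starCoeff (h : Fin N → ℕ) : ℝ :=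
  (1 / v + ∑ j ∈ (Finset.univ.erase i).filter (fun j => 0 < h j),
      2 * β * h j / (2 * β * h j * v + 1)) ^ (-(d : ℝ) / 2) *
    ∏ j ∈ (Finset.univ.erase i).filter (fun j => 0 < h j),
      (2 * β * h j * v + 1) ^ (-(d : ℝ) / 2)

/-- The closed form of the `m`-th factorial moment of `strengthLaw d β α v i`. -/
noncomputable def strengthFactorialMoment (m : ℕ) : ℝ :=
  ∑ h ∈ (Finset.univ.erase i).piAntidiag m,
    (Nat.multinomial (Finset.univ.erase i) h : ℝ) *
      rexp (∑ j ∈ Finset.univ.erase i, (α i + α j) * h j) *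
      v ^ (-(d : ℝ) / 2) * starCoeff d β v i h

variable {β v}

lemma jointLaw_eq_compProd (hv : 0 ≤ v) :
    jointLaw d N β α v = (Measure.pi fun _ => gaussMeasure d v) ⊗ₘ edgeKernel β α := by
  rw [Measure.compProd_eq_comp_prod, pi_gaussMeasure d hv]
  refine congrArg (Measure.bind _) (funext fun z => ?_)
  rw [Kernel.prod_apply, Kernel.id_apply, Measure.dirac_prod]
  rfl

lemma starCoeff_nonneg (hβ : 0 ≤ β) (hv : 0 ≤ v) (h : Fin N → ℕ) :
    0 ≤ starCoeff d β v i h := by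
  unfold starCoeff
  positivity

lemma rpow_mul_starCoeff (hβ : 0 ≤ β) (hv : 0 < v) (h : Fin N → ℕ) :
    v ^ (-(d : ℝ) / 2) * starCoeff d β v i h =
      (∏ j ∈ Finset.univ.erase i, (2 * (β * h j) * v + 1) ^ (-(d : ℝ) / 2)) *
        (2 * (∑ j ∈ Finset.univ.erase i, β * h j / (2 * (β * h j) * v + 1)) * v + 1) ^
          (-(d : ℝ) / 2) := by
  have hsum : ∑ j ∈ (Finset.univ.erase i).filter (fun j => 0 < h j),
      2 * β * h j / (2 * β * h j * v + 1) =
      2 * ∑ j ∈ Finset.univ.erase i, β * h j / (2 * (β * h j) * v + 1) := by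
    rw [Finset.sum_filter_of_ne fun j _ hj => Nat.pos_of_ne_zero fun h0 => hj (by simp [h0]),
      Finset.mul_sum]
    exact Finset.sum_congr rfl fun j _ => by ring
  have hprod : ∏ j ∈ (Finset.univ.erase i).filter (fun j => 0 < h j),
      (2 * β * h j * v + 1) ^ (-(d : ℝ) / 2) =
      ∏ j ∈ Finset.univ.erase i, (2 * (β * h j) * v + 1) ^ (-(d : ℝ) / 2) := by
    rw [Finset.prod_filter_of_ne fun j _ hj => Nat.pos_of_ne_zero fun h0 => hj (by simp [h0])]
    simp only [mul_assoc]
  rw [starCoeff, hsum, hprod, ← mul_assoc, ← Real.mul_rpow hv.le (by positivity), mul_comm]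
  congr 2
  field_simp
  ring

lemma strengthFactorialMoment_nonneg (hβ : 0 ≤ β) (hv : 0 ≤ v) (m : ℕ) :
    0 ≤ strengthFactorialMoment d β α v i m :=
  Finset.sum_nonneg fun h _ => mul_nonneg (by positivity) (starCoeff_nonneg d i hβ hv h)

lemma lintegral_descFactorial_strengthLaw (hβ : 0 ≤ β) (hv : 0 < v) (m : ℕ) :
    ∫⁻ n, (n.descFactorial m : ℝ≥0∞) ∂strengthLaw d β α v i =
      ENNReal.ofReal (strengthFactorialMoment d β α v i m) := by
  have hmeas : Measurable fun n : ℕ => (n.descFactorial m : ℝ≥0∞) := measurable_of_countable _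
  have hcomp : Measurable fun x : (Fin N → EuclideanSpace ℝ (Fin d)) × (Pairs N → ℕ) =>
      ((nodeStrength x.2 i).descFactorial m : ℝ≥0∞) :=
    hmeas.comp (measurable_nodeStrength_snd i)
  rw [strengthLaw, lintegral_map hmeas (measurable_nodeStrength_snd i),
    jointLaw_eq_compProd d α hv.le, Measure.lintegral_compProd hcomp]
  simp only [lintegral_descFactorial_nodeStrength_edgeKernel, sum_edgeRate_edge_pow]
  rw [lintegral_finsetSum _ fun h _ => by fun_prop, strengthFactorialMoment,
    ENNReal.ofReal_sum_of_nonneg fun h _ =>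
      mul_nonneg (by positivity) (starCoeff_nonneg d i hβ hv.le h)]
  refine Finset.sum_congr rfl fun h _ => ?_
  rw [lintegral_const_mul _ (by fun_prop),
    lintegral_pi_gaussMeasure_prod_exp_star d hv i fun j => by positivity,
    ← rpow_mul_starCoeff d i hβ hv h, ← ENNReal.ofReal_mul (by positivity), ← mul_assoc]

lemma integrable_descFactorial_strengthLaw (hβ : 0 ≤ β) (hv : 0 < v) (m : ℕ) :
    Integrable (fun n : ℕ => (n.descFactorial m : ℝ)) (strengthLaw d β α v i) := by
  refine ⟨(measurable_of_countable _).aestronglyMeasurable, ?_⟩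
  simp only [HasFiniteIntegral, Real.enorm_natCast, lintegral_descFactorial_strengthLaw d α i hβ hv,
    ENNReal.ofReal_lt_top]

lemma integral_descFactorial_strengthLaw (hβ : 0 ≤ β) (hv : 0 < v) (m : ℕ) :
    ∫ n, (n.descFactorial m : ℝ) ∂strengthLaw d β α v i = strengthFactorialMoment d β α v i m := by
  rw [integral_eq_lintegral_of_nonneg_ae (.of_forall fun _ => Nat.cast_nonneg _)
    (measurable_of_countable _).aestronglyMeasurable]
  simp only [ENNReal.ofReal_natCast, lintegral_descFactorial_strengthLaw d α i hβ hv,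
    ENNReal.toReal_ofReal (strengthFactorialMoment_nonneg d α i hβ hv.le m)]

end JointLaw

lemma filter_antidiagonalTuple_eq_piAntidiag {n : ℕ} (i : Fin n) (m : ℕ) :
    (Finset.Nat.antidiagonalTuple n m).filter (fun h => h i = 0) =
      (Finset.univ.erase i).piAntidiag m := by
  ext h
  have hsupport : (∀ j, h j ≠ 0 → j ∈ Finset.univ.erase i) ↔ h i = 0 := by
    simp only [Finset.mem_erase, Finset.mem_univ, and_true]
    exact ⟨fun hj => not_imp_comm.1 (hj i) (· rfl), fun hi j hj hji => hj (hji ▸ hi)⟩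
  rw [Finset.mem_filter, Finset.Nat.mem_antidiagonalTuple, Finset.mem_piAntidiag, hsupport]
  exact and_congr_left fun hi => by rw [Finset.sum_erase _ hi]

namespace MSLS

variable {Ω : Type} [MeasurableSpace Ω] (M : MSLS Ω)

lemma measurableSet_state_eq (t : ℕ) (k : Fin M.K) : MeasurableSet {ω | M.s t ω = k} :=
  M.s_meas t (measurableSet_singleton k)

lemma measurable_strength (i : Fin M.N) (t : ℕ) : Measurable (M.strength i t) :=
  Finset.measurable_fun_sum _ fun j _ => M.Y_meas i j t

lemma strength_eq_nodeStrength (i : Fin M.N) (t : ℕ) (ω : Ω) :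
    M.strength i t ω = nodeStrength (fun p => M.Y p.1.1 p.1.2 t ω) i := by
  rw [strength, nodeStrength, Finset.sum_subtype (p := (· ≠ i)) _ (by simp)]
  refine Finset.sum_congr rfl fun j _ => ?_
  unfold edge
  split_ifs
  · rfl
  · exact M.Y_symm _ _ _ _

lemma map_strength {μ : Measure Ω} {t : ℕ} {k : Fin M.K}
    (hμ : μ.map (fun ω => ((fun i => M.Z i k ω), fun p : Pairs M.N => M.Y p.1.1 p.1.2 t ω)) =
      jointLaw M.d M.N M.β M.α (M.σ2 k)) (i : Fin M.N) :
    μ.map (M.strength i t) = strengthLaw M.d M.β M.α (M.σ2 k) i := by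
  have hZ := M.Z_meas
  have hY := M.Y_meas
  rw [strengthLaw, ← hμ, Measure.map_map (measurable_nodeStrength_snd i) (by fun_prop)]
  exact congrArg μ.map (funext fun ω => M.strength_eq_nodeStrength i t ω)

lemma map_strength_cond_prev (i : Fin M.N) (t : ℕ) (l : Fin M.K) :
    (M.P[|{ω | M.s t ω = l}]).map (M.strength i (t + 1)) =
      ∑ k, ENNReal.ofReal (M.q l k) • strengthLaw M.d M.β M.α (M.σ2 k) i := by
  have htransition (k : Fin M.K) :
      (M.P[|{ω | M.s t ω = l}]) (M.s (t + 1) ⁻¹' {k}) = ENNReal.ofReal (M.q l k) := by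
    rw [← M.trans_prob t l k, ENNReal.ofReal_toReal (measure_ne_top _ _)]
    rfl
  rw [← sum_meas_smul_cond_fiber (M.s_meas (t + 1)) (M.P[|{ω | M.s t ω = l}]),
    Measure.map_finset_sum' (M.measurable_strength i (t + 1)).aemeasurable]
  refine Finset.sum_congr rfl fun k _ => ?_
  rw [Measure.map_smul, htransition]
  rcases eq_or_ne (M.q l k) 0 with hq | hq
  · simp only [hq, ENNReal.ofReal_zero, zero_smul]
  · rw [← M.map_strength (M.cond_law_pair t l k hq), ← cond_cond_eq_cond_inter
      (M.measurableSet_state_eq t l) (M.measurableSet_state_eq (t + 1) k)]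
    rfl

variable {F : Type*} [NormedAddCommGroup F] [NormedSpace ℝ F]

lemma integral_strength_cond_state (f : ℕ → F) (i : Fin M.N) (t : ℕ) (k : Fin M.K) :
    ∫ ω, f (M.strength i t ω) ∂(M.P[|{ω | M.s t ω = k}]) =
      ∫ n, f n ∂strengthLaw M.d M.β M.α (M.σ2 k) i := by
  rw [← M.map_strength (M.cond_law_state t k), integral_map
    (M.measurable_strength i t).aemeasurable .of_discrete]

lemma integral_strength_cond_prev {f : ℕ → F} {i : Fin M.N}
    (hf : ∀ k, Integrable f (strengthLaw M.d M.β M.α (M.σ2 k) i)) (t : ℕ) (l : Fin M.K) :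
    ∫ ω, f (M.strength i (t + 1) ω) ∂(M.P[|{ω | M.s t ω = l}]) =
      ∑ k, M.q l k • ∫ ω, f (M.strength i (t + 1) ω) ∂(M.P[|{ω | M.s (t + 1) ω = k}]) := by
  rw [← integral_map (M.measurable_strength i (t + 1)).aemeasurable .of_discrete,
    M.map_strength_cond_prev, integral_finsetSum_measure fun k _ =>
      (hf k).smul_measure ENNReal.ofReal_ne_top]
  simp only [integral_smul_measure, ENNReal.toReal_ofReal (M.q_nonneg l _),
    M.integral_strength_cond_state]

end MSLS

/-- Under the MS-LS model, the `m`-th derivative at `x = 1` of the conditional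
pgf of the nodal strength given `s_{t-1} = l` (equivalently, the `m`-th factorial moment of the
nodal strength given `s_{t-1} = l`) is the `q_{lk}`-mixture of the within-state `m`-th factorial
moments, and is given by the explicit closed form. -/
theorem statement0 {Ω : Type} [MeasurableSpace Ω] (M : MSLS Ω) (i : Fin M.N)
    (m : ℕ) (hm : 1 ≤ m) (t : ℕ) (l : Fin M.K) :
    (∫ ω, (Nat.descFactorial (M.strength i (t + 1) ω) m : ℝ)
        ∂(M.P[|{ω | M.s t ω = l}]) =
      ∑ k, M.q l k *
        ∫ ω, (Nat.descFactorial (M.strength i (t + 1) ω) m : ℝ)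
          ∂(M.P[|{ω | M.s (t + 1) ω = k}])) ∧
    (∫ ω, (Nat.descFactorial (M.strength i (t + 1) ω) m : ℝ)
        ∂(M.P[|{ω | M.s t ω = l}]) =
      ∑ k, ∑ h ∈ (Finset.Nat.antidiagonalTuple M.N m).filter (fun h => h i = 0),
        (Nat.multinomial (Finset.univ.erase i) h : ℝ) *
          Real.exp (∑ j ∈ Finset.univ.erase i, (M.α i + M.α j) * (h j : ℝ)) *
          (M.σ2 k) ^ (-(M.d : ℝ) / 2) *
          ((1 / M.σ2 k +
              ∑ j ∈ (Finset.univ.erase i).filter (fun j => 0 < h j),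
                2 * M.β * (h j : ℝ) / (2 * M.β * (h j : ℝ) * M.σ2 k + 1)) ^
              (-(M.d : ℝ) / 2) *
            ∏ j ∈ (Finset.univ.erase i).filter (fun j => 0 < h j),
              (2 * M.β * (h j : ℝ) * M.σ2 k + 1) ^ (-(M.d : ℝ) / 2)) *
          M.q l k) := by
  have hstate (k : Fin M.K) :
      ∫ ω, (Nat.descFactorial (M.strength i (t + 1) ω) m : ℝ) ∂(M.P[|{ω | M.s (t + 1) ω = k}]) =
        strengthFactorialMoment M.d M.β M.α (M.σ2 k) i m := by
    rw [← integral_descFactorial_strengthLaw M.d M.α i M.β_pos.le (M.σ2_pos k) m]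
    exact M.integral_strength_cond_state (fun n => (n.descFactorial m : ℝ)) i (t + 1) k
  have hmix := M.integral_strength_cond_prev (fun k =>
    integrable_descFactorial_strengthLaw M.d M.α i M.β_pos.le (M.σ2_pos k) m) t l
  refine ⟨hmix, hmix.trans (Finset.sum_congr rfl fun k _ => ?_)⟩
  rw [hstate, smul_eq_mul, mul_comm, filter_antidiagonalTuple_eq_piAntidiag,
    strengthFactorialMoment, Finset.sum_mul]
  rfl
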